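/- arXiv:1308.5695 — 3 statements merged into one kernel-verified Lean document; each statement's English description precedes it below -/
import Mathlib

section
/- Let n ≥ 1 and q ∈ ℝ∖{0}. If μ is a nonzero Borel measure on ℝⁿ that is q-complemented concave, then μ(ℝⁿ) = ∞. -/
open MeasureTheory Set Filter
open scoped Pointwise ENNReal

/-- The inner measure induced by a measure `μ`. -/
noncomputable def innerMeasure {α : Type*} [MeasurableSpace α] (μ : Measure α) (S : Set α) :
    ℝ≥0∞ :=
  ⨆ (F : Set α) (_ : MeasurableSet F) (_ : F ⊆ S), μ F

/-- A Borel measure `μ` on `ℝⁿ` is `q`-complemented concave (`q`-CC). -/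
def IsQCC {n : ℕ} (q : ℝ) (μ : Measure (Fin n → ℝ)) : Prop :=
  ∀ lam ∈ Set.Ioo (0 : ℝ) 1, ∀ A B : Set (Fin n → ℝ),
    MeasurableSet A → MeasurableSet B → μ Aᶜ < ⊤ → μ Bᶜ < ⊤ →
    innerMeasure μ ((lam • A + (1 - lam) • B)ᶜ) ≤
      (ENNReal.ofReal lam * μ Aᶜ ^ q + ENNReal.ofReal (1 - lam) * μ Bᶜ ^ q) ^ (1 / q)

theorem le_innerMeasure {α : Type*} [MeasurableSpace α] (μ : Measure α) {F S : Set α}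
    (hF : MeasurableSet F) (hFS : F ⊆ S) : μ F ≤ innerMeasure μ S :=
  le_iSup_of_le F (le_iSup_of_le hF (le_iSup_of_le hFS le_rfl))

/-- Comparing the whole space with the empty set already bounds the total mass of a finite
`q`-complemented concave measure. -/
theorem IsQCC.measure_univ_le {n : ℕ} {q : ℝ} {μ : Measure (Fin n → ℝ)} (h : IsQCC q μ)
    (hfin : μ univ < ⊤) :
    μ univ ≤ (ENNReal.ofReal (1 / 2) * 0 ^ q +
      ENNReal.ofReal (1 / 2) * μ univ ^ q) ^ (1 / q) := by
  have key := h (1 / 2) ⟨by norm_num, by norm_num⟩ univ ∅ MeasurableSet.univ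
    MeasurableSet.empty (by simp) (by simpa using hfin)
  have half : (1 : ℝ) - 1 / 2 = 1 / 2 := by norm_num
  rw [half, compl_univ, compl_empty, measure_empty] at key
  exact (le_innerMeasure μ MeasurableSet.univ (by simp)).trans key

/-- any nonzero `q`-complemented concave measure on `ℝⁿ` (`q ≠ 0`) has
infinite total mass. -/
theorem stmt9 (n : ℕ) (hn : 1 ≤ n) (q : ℝ) (hq : q ≠ 0)
    (μ : Measure (Fin n → ℝ)) (hμcc : IsQCC q μ) (hμne : 0 < μ Set.univ) :
    μ Set.univ = ⊤ := by
  by_contra hne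
  have hfin : μ univ < ⊤ := lt_top_iff_ne_top.2 hne
  have key := hμcc.measure_univ_le hfin
  rcases hq.lt_or_gt with hneg | hpos
  · rw [ENNReal.zero_rpow_of_neg hneg, ENNReal.mul_top (by simp), top_add,
      ENNReal.top_rpow_of_neg (one_div_neg.2 hneg)] at key
    exact hμne.not_ge key
  · rw [ENNReal.zero_rpow_of_pos hpos, mul_zero, zero_add, one_div q,
      ENNReal.le_rpow_inv_iff hpos] at key
    have hpow_ne_zero : μ univ ^ q ≠ 0 := (ENNReal.rpow_pos hμne hne).ne'
    have hpow_ne_top : μ univ ^ q ≠ ⊤ := ENNReal.rpow_ne_top_of_nonneg hpos.le hne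
    refine key.not_gt ?_
    calc ENNReal.ofReal (1 / 2) * μ univ ^ q < 1 * μ univ ^ q :=
          ENNReal.mul_lt_mul_left hpow_ne_zero hpow_ne_top
            (ENNReal.ofReal_lt_one.2 (by norm_num))
      _ = μ univ ^ q := one_mul _
end

section
/- Let n ≥ 1 and let q ∈ (−∞, 1/n]∖{0}. If μ is a Borel measure on ℝⁿ which is both q-concave and q-homogeneous, then μ is q-complemented concave. -/
open MeasureTheory Set Filter
open scoped Pointwise ENNReal

/-- One-dimensional Brunn–Minkowski inequality for compact sets. -/
theorem volume_add_volume_le_volume_add {K L : Set ℝ} (hK : IsCompact K) (hL : IsCompact L)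
    (hK0 : K.Nonempty) (hL0 : L.Nonempty) : volume K + volume L ≤ volume (K + L) := by
  obtain ⟨a, haK, ha⟩ := hK.exists_isGreatest hK0
  obtain ⟨b, hbL, hb⟩ := hL.exists_isLeast hL0
  have hinter : volume ((fun x => x + b) '' K ∩ (fun y => a + y) '' L) = 0 := by
    refine measure_mono_null (t := {a + b}) ?_ (by simp)
    rintro _ ⟨⟨x, hx, rfl⟩, y, hy, hxy⟩
    have h1 : x ≤ a := ha hx
    have h2 : b ≤ y := hb hy
    simp only [mem_singleton_iff] at *
    linarith
  have hmeas : MeasurableSet ((fun y => a + y) '' L) :=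
    (hL.image (continuous_const.add continuous_id)).measurableSet
  have hunion := measure_union_add_inter (μ := volume) ((fun x => x + b) '' K) hmeas
  have hKv : volume ((fun x => x + b) '' K) = volume K := by
    simp [image_add_right, measure_preimage_add_right]
  have hLv : volume ((fun y => a + y) '' L) = volume L := by
    simp [image_add_left, measure_preimage_add]
  rw [hinter, add_zero, hKv, hLv] at hunion
  rw [← hunion]
  refine measure_mono (union_subset ?_ ?_)
  · rintro _ ⟨x, hx, rfl⟩
    exact add_mem_add hx hbL
  · rintro _ ⟨y, hy, rfl⟩
    exact add_mem_add haK hy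

theorem le_of_forall_isCompact_le {A : Set ℝ} (hA : MeasurableSet A) {φ : ℝ≥0∞ → ℝ≥0∞}
    (hφ : Continuous φ) {C : ℝ≥0∞} (h : ∀ K ⊆ A, IsCompact K → φ (volume K) ≤ C) :
    φ (volume A) ≤ C := by
  have hmem : volume A ∈ closure {x | φ x ≤ C} := by
    rw [mem_closure_iff_seq_limit]
    rcases eq_or_ne (volume A) 0 with h0 | h0
    · refine ⟨fun _ => volume (∅ : Set ℝ), fun _ => h ∅ (empty_subset A) isCompact_empty, ?_⟩
      simp [h0]
    · obtain ⟨u, -, hu, hlim⟩ := exists_seq_strictMono_tendsto' (pos_iff_ne_zero.2 h0)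
      choose K hKA hK huK using fun k => hA.exists_lt_isCompact (hu k).2
      exact ⟨fun k => volume (K k), fun k => h _ (hKA k) (hK k),
        tendsto_of_tendsto_of_tendsto_of_le_of_le hlim tendsto_const_nhds
          (fun k => (huK k).le) fun k => measure_mono (hKA k)⟩
  rwa [(isClosed_le hφ continuous_const).closure_eq] at hmem

/-- If the convex combinations of points of `A` and `B` lie in `J` and avoid `F`, then `J` is large
enough to hold both `F` and a copy of the Minkowski combination. -/
theorem volume_add_le_of_combo_disjoint {lam : ℝ} (hlam : lam ∈ Ioo (0 : ℝ) 1)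
    {A B F J : Set ℝ} (hA : MeasurableSet A) (hB : MeasurableSet B)
    (hA0 : A.Nonempty) (hB0 : B.Nonempty) (hF : F ⊆ J)
    (hAB : ∀ a ∈ A, ∀ b ∈ B, lam * a + (1 - lam) * b ∈ J \ F) :
    volume F + (ENNReal.ofReal lam * volume A + ENNReal.ofReal (1 - lam) * volume B)
      ≤ volume J := by
  obtain ⟨hl0, hl1⟩ := hlam
  obtain ⟨a, ha⟩ := hA0
  obtain ⟨b, hb⟩ := hB0
  have key : ∀ K ⊆ A, IsCompact K → ∀ L ⊆ B, IsCompact L →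
      volume F + (ENNReal.ofReal lam * volume K + ENNReal.ofReal (1 - lam) * volume L)
        ≤ volume J := by
    intro K hKA hK L hLB hL
    have hK' : IsCompact (lam • (insert a K)) := (hK.insert a).smul lam
    have hL' : IsCompact ((1 - lam) • (insert b L)) := (hL.insert b).smul (1 - lam)
    have hS := volume_add_volume_le_volume_add hK' hL'
      ((insert_nonempty a K).smul_set) ((insert_nonempty b L).smul_set)
    rw [Measure.addHaar_smul, Measure.addHaar_smul] at hS
    simp only [Module.finrank_self, pow_one, abs_of_pos hl0,
      abs_of_pos (sub_pos.2 hl1)] at hS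
    have hsub : lam • (insert a K) + (1 - lam) • (insert b L) ⊆ J \ F := by
      rintro _ ⟨_, ⟨x, hx, rfl⟩, _, ⟨y, hy, rfl⟩, rfl⟩
      exact hAB x (insert_subset ha hKA hx) y (insert_subset hb hLB hy)
    calc _ ≤ volume F + volume (lam • (insert a K) + (1 - lam) • (insert b L)) := by
          gcongr
          refine le_trans ?_ hS
          gcongr <;> exact subset_insert _ _
      _ = volume (F ∪ (lam • (insert a K) + (1 - lam) • (insert b L))) :=
          (measure_union (disjoint_sdiff_self_right.mono_right hsub)
            (hK'.add hL').measurableSet).symm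
      _ ≤ _ := measure_mono (union_subset hF (hsub.trans sdiff_subset))
  refine le_of_forall_isCompact_le hA (φ := fun x => volume F + (ENNReal.ofReal lam * x +
    ENNReal.ofReal (1 - lam) * volume B)) (by fun_prop (disch := simp)) fun K hKA hK => ?_
  exact le_of_forall_isCompact_le hB (φ := fun x => volume F + (ENNReal.ofReal lam * volume K +
    ENNReal.ofReal (1 - lam) * x)) (by fun_prop (disch := simp)) fun L hLB hL =>
      key K hKA hK L hLB hL

theorem lintegral_exp_smul (f : ℝ → ℝ≥0∞) (c : ℝ) :
    ∫⁻ u, f (Real.exp u) * ENNReal.ofReal (Real.exp (c * u)) =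
      ∫⁻ r in Ioi 0, f r * ENNReal.ofReal (r ^ (c - 1)) := by
  have h := lintegral_image_eq_lintegral_abs_deriv_mul (s := univ) (f := Real.exp)
    (f' := Real.exp) MeasurableSet.univ
    (fun x _ => (Real.hasDerivAt_exp x).hasDerivWithinAt) (Real.exp_injective.injOn)
    (fun r => f r * ENNReal.ofReal (r ^ (c - 1)))
  rw [image_univ, Real.range_exp, Measure.restrict_univ] at h
  rw [h]
  refine lintegral_congr fun u => ?_
  rw [abs_of_pos (Real.exp_pos u), mul_left_comm, ← ENNReal.ofReal_mul (Real.exp_pos u).le,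
    ← Real.exp_mul, ← Real.exp_add]
  ring_nf

theorem volume_inter_le_of_combo_notMem_of_ne_top {lam : ℝ} (hlam : lam ∈ Ioo (0 : ℝ) 1)
    {A B F J : Set ℝ} (hA : MeasurableSet A) (hB : MeasurableSet B)
    (hJ : J.OrdConnected) (hJtop : volume J ≠ ⊤)
    (hA0 : (A ∩ J).Nonempty) (hB0 : (B ∩ J).Nonempty)
    (hAB : ∀ a ∈ A ∩ J, ∀ b ∈ B ∩ J, lam * a + (1 - lam) * b ∉ F) :
    volume (F ∩ J) ≤
      ENNReal.ofReal lam * volume (Aᶜ ∩ J) + ENNReal.ofReal (1 - lam) * volume (Bᶜ ∩ J) := by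
  have h := volume_add_le_of_combo_disjoint hlam (hA.inter hJ.measurableSet)
    (hB.inter hJ.measurableSet) hA0 hB0 (inter_subset_right : F ∩ J ⊆ J) fun a ha b hb =>
      ⟨hJ.convex (𝕜 := ℝ) ha.2 hb.2 hlam.1.le (sub_nonneg.2 hlam.2.le) (by ring),
        fun hF => hAB a ha b hb hF.1⟩
  have hsplit : volume J = ENNReal.ofReal lam * volume J + ENNReal.ofReal (1 - lam) * volume J := by
    rw [← add_mul, ← ENNReal.ofReal_add hlam.1.le (sub_nonneg.2 hlam.2.le)]
    simp
  have hsplitA : volume J = volume (A ∩ J) + volume (Aᶜ ∩ J) := by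
    rw [inter_comm A, inter_comm Aᶜ, ← sdiff_eq, measure_inter_add_sdiff J hA]
  have hsplitB : volume J = volume (B ∩ J) + volume (Bᶜ ∩ J) := by
    rw [inter_comm B, inter_comm Bᶜ, ← sdiff_eq, measure_inter_add_sdiff J hB]
  have hfin : ENNReal.ofReal lam * volume (A ∩ J) + ENNReal.ofReal (1 - lam) * volume (B ∩ J)
      ≠ ⊤ := by
    have h1 := measure_ne_top_of_subset (inter_subset_right : A ∩ J ⊆ J) hJtop
    have h2 := measure_ne_top_of_subset (inter_subset_right : B ∩ J ⊆ J) hJtop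
    finiteness
  refine (ENNReal.add_le_add_iff_right hfin).1 (h.trans (le_of_eq ?_))
  conv_lhs => rw [hsplit]
  nth_rewrite 1 [hsplitA]
  rw [hsplitB]
  ring

theorem volume_inter_le_of_combo_notMem {lam : ℝ} (hlam : lam ∈ Ioo (0 : ℝ) 1)
    {A B F J : Set ℝ} (hA : MeasurableSet A) (hB : MeasurableSet B)
    (hJ : J.OrdConnected)
    (hA0 : (A ∩ J).Nonempty) (hB0 : (B ∩ J).Nonempty)
    (hAB : ∀ a ∈ A ∩ J, ∀ b ∈ B ∩ J, lam * a + (1 - lam) * b ∉ F) :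
    volume (F ∩ J) ≤
      ENNReal.ofReal lam * volume (Aᶜ ∩ J) + ENNReal.ofReal (1 - lam) * volume (Bᶜ ∩ J) := by
  obtain ⟨a, haA, haJ⟩ := hA0
  obtain ⟨b, hbB, hbJ⟩ := hB0
  have hmono : Monotone fun R : ℝ => F ∩ (J ∩ Icc (-R) R) := fun R S hRS =>
    inter_subset_inter_right _ (inter_subset_inter_right _
      (Icc_subset_Icc (neg_le_neg hRS) hRS))
  have hlim := tendsto_measure_iUnion_atTop (μ := volume) hmono
  have hU : ⋃ R : ℝ, F ∩ (J ∩ Icc (-R) R) = F ∩ J := by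
    rw [← inter_iUnion, ← inter_iUnion, iUnion_eq_univ_iff.2, inter_univ]
    exact fun x => ⟨|x|, neg_abs_le x, le_abs_self x⟩
  rw [hU] at hlim
  refine le_of_tendsto hlim ?_
  filter_upwards [eventually_ge_atTop |a|, eventually_ge_atTop |b|] with R haR hbR
  refine (volume_inter_le_of_combo_notMem_of_ne_top hlam hA hB (hJ.inter ordConnected_Icc)
    (measure_ne_top_of_subset inter_subset_right (by simp))
    ⟨a, haA, haJ, abs_le.1 haR⟩ ⟨b, hbB, hbJ, abs_le.1 hbR⟩ fun x hx y hy =>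
      hAB x ⟨hx.1, hx.2.1⟩ y ⟨hy.1, hy.2.1⟩).trans ?_
  gcongr <;> exact inter_subset_left

theorem rpow_superlevel_ordConnected (p t : ℝ) : {r : ℝ | 0 < r ∧ t < r ^ p}.OrdConnected := by
  refine ordConnected_iff.2 fun x hx y hy hxy z hz => ?_
  have hz0 : 0 < z := hx.1.trans_le hz.1
  refine ⟨hz0, ?_⟩
  rcases le_total 0 p with hp | hp
  · exact hx.2.trans_le (Real.rpow_le_rpow hx.1.le hz.1 hp)
  · exact hy.2.trans_le (Real.rpow_le_rpow_of_nonpos hz0 hz.2 hp)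

theorem setLIntegral_rpow_superlevel_eq_top {p t : ℝ} (hp : 0 ≤ p ∨ p < -1) (ht : 0 < t)
    (hne : {r : ℝ | 0 < r ∧ t < r ^ p}.Nonempty) :
    ∫⁻ r in {r : ℝ | 0 < r ∧ t < r ^ p}, ENNReal.ofReal (r ^ p) = ⊤ := by
  obtain ⟨r₀, hr₀, htr₀⟩ := hne
  rw [eq_top_iff]
  rcases hp with hp | hp
  · calc (⊤ : ℝ≥0∞) = ∫⁻ r in Ioi r₀, ENNReal.ofReal t := by
          simp [ENNReal.mul_top, ht]
      _ ≤ ∫⁻ r in Ioi r₀, ENNReal.ofReal (r ^ p) :=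
          setLIntegral_mono' measurableSet_Ioi fun r hr => ENNReal.ofReal_le_ofReal
            (htr₀.le.trans (Real.rpow_le_rpow hr₀.le (le_of_lt hr) hp))
      _ ≤ ∫⁻ r in {r : ℝ | 0 < r ∧ t < r ^ p}, ENNReal.ofReal (r ^ p) :=
          lintegral_mono_set fun r hr =>
          ⟨hr₀.trans hr, htr₀.trans_le (Real.rpow_le_rpow hr₀.le (le_of_lt hr) hp)⟩
  · have hnot : ¬ IntegrableOn (fun r : ℝ => r ^ p) (Ioo 0 r₀) := by
      rw [intervalIntegral.integrableOn_Ioo_rpow_iff hr₀]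
      linarith
    have htop : ∫⁻ r in Ioo 0 r₀, ENNReal.ofReal (r ^ p) = ⊤ := by
      by_contra hfin
      refine hnot ⟨by fun_prop, ?_⟩
      rw [hasFiniteIntegral_iff_ofReal]
      · exact lt_top_iff_ne_top.2 hfin
      · filter_upwards [ae_restrict_mem measurableSet_Ioo] with r hr
        exact Real.rpow_nonneg hr.1.le p
    rw [← htop]
    exact lintegral_mono_set fun r hr => ⟨hr.1, htr₀.trans_le
      (Real.rpow_le_rpow_of_nonpos hr.1 hr.2.le (by linarith))⟩

theorem setLIntegral_rpow_eq_lintegral_volume {X : Set ℝ} (hX : MeasurableSet X) (p : ℝ) :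
    ∫⁻ r in X ∩ Ioi 0, ENNReal.ofReal (r ^ p) =
      ∫⁻ t in Ioi 0, volume (X ∩ {r : ℝ | 0 < r ∧ t < r ^ p}) := by
  rw [lintegral_eq_lintegral_meas_lt]
  · refine lintegral_congr fun t => ?_
    rw [Measure.restrict_apply' (hX.inter measurableSet_Ioi)]
    congr 1
    ext r
    simp only [mem_inter_iff, mem_ofPred_eq, mem_Ioi]
    tauto
  · filter_upwards [ae_restrict_mem (hX.inter measurableSet_Ioi)] with r hr
    exact Real.rpow_nonneg (le_of_lt hr.2) p
  · fun_prop

theorem setLIntegral_rpow_le_of_combo_notMem {lam : ℝ} (hlam : lam ∈ Ioo (0 : ℝ) 1) {p : ℝ}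
    (hp : 0 ≤ p ∨ p < -1) {A B F : Set ℝ} (hA : MeasurableSet A) (hB : MeasurableSet B)
    (hF : MeasurableSet F)
    (hAB : ∀ a ∈ A, 0 < a → ∀ b ∈ B, 0 < b → lam * a + (1 - lam) * b ∉ F) :
    ∫⁻ r in F ∩ Ioi 0, ENNReal.ofReal (r ^ p) ≤
      ENNReal.ofReal lam * (∫⁻ r in Aᶜ ∩ Ioi 0, ENNReal.ofReal (r ^ p)) +
      ENNReal.ofReal (1 - lam) * ∫⁻ r in Bᶜ ∩ Ioi 0, ENNReal.ofReal (r ^ p) := by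
  have hl : ENNReal.ofReal lam ≠ 0 := by simpa using hlam.1
  have hl' : ENNReal.ofReal (1 - lam) ≠ 0 := by simpa using hlam.2
  by_cases hAtop : ∫⁻ r in Aᶜ ∩ Ioi 0, ENNReal.ofReal (r ^ p) = ⊤
  · simp [hAtop, ENNReal.mul_top hl]
  by_cases hBtop : ∫⁻ r in Bᶜ ∩ Ioi 0, ENNReal.ofReal (r ^ p) = ⊤
  · simp [hBtop, ENNReal.mul_top hl']
  have hmeet : ∀ X : Set ℝ, ∫⁻ r in Xᶜ ∩ Ioi 0, ENNReal.ofReal (r ^ p) ≠ ⊤ → ∀ t : ℝ, 0 < t →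
      {r : ℝ | 0 < r ∧ t < r ^ p}.Nonempty → (X ∩ {r : ℝ | 0 < r ∧ t < r ^ p}).Nonempty := by
    intro X hX t ht hne
    by_contra hempty
    refine hX (eq_top_iff.2 ?_)
    rw [← setLIntegral_rpow_superlevel_eq_top hp ht hne]
    exact lintegral_mono_set fun r hr => ⟨fun hrX => hempty ⟨r, hrX, hr⟩, hr.1⟩
  rw [setLIntegral_rpow_eq_lintegral_volume hF, setLIntegral_rpow_eq_lintegral_volume hA.compl,
    setLIntegral_rpow_eq_lintegral_volume hB.compl,
    ← lintegral_const_mul' _ _ ENNReal.ofReal_ne_top,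
    ← lintegral_const_mul' _ _ ENNReal.ofReal_ne_top]
  have hanti : Antitone fun t : ℝ => volume (Aᶜ ∩ {r : ℝ | 0 < r ∧ t < r ^ p}) :=
    fun t u htu => measure_mono fun r hr => ⟨hr.1, hr.2.1, htu.trans_lt hr.2.2⟩
  rw [← lintegral_add_left (hanti.measurable.const_mul _)]
  refine setLIntegral_mono' measurableSet_Ioi fun t ht => ?_
  rcases eq_empty_or_nonempty {r : ℝ | 0 < r ∧ t < r ^ p} with hJ | hJ
  · simp [hJ]
  · exact volume_inter_le_of_combo_notMem hlam hA hB (rpow_superlevel_ordConnected p t)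
      (hmeet A hAtop t ht hJ) (hmeet B hBtop t ht hJ)
      fun a ha b hb => hAB a ha.1 ha.2.1 b hb.1 hb.2.1

section Radial

variable {V : Type*} [NormedAddCommGroup V] [NormedSpace ℝ V] [MeasurableSpace V] [BorelSpace V]

theorem lintegral_comp_smul_of_homogeneous {μ : Measure V} {α : ℝ}
    (hhom : ∀ A : Set V, MeasurableSet A → ∀ c : ℝ, 0 < c →
      μ (c • A) = ENNReal.ofReal (c ^ α) * μ A)
    {f : V → ℝ≥0∞} (hf : Measurable f) (u : ℝ) :
    ∫⁻ x, f (Real.exp u • x) ∂μ = ENNReal.ofReal (Real.exp (-(α * u))) * ∫⁻ x, f x ∂μ := by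
  have hmap : μ.map (fun x => Real.exp u • x) = ENNReal.ofReal (Real.exp (-(α * u))) • μ := by
    ext S hS
    rw [Measure.map_apply (measurable_const_smul _) hS, preimage_smul₀ (Real.exp_ne_zero u),
      hhom S hS _ (inv_pos.2 (Real.exp_pos u)), ← Real.exp_neg, ← Real.exp_mul]
    simp only [Measure.smul_apply, smul_eq_mul]
    ring_nf
  rw [← lintegral_map hf (measurable_const_smul _), hmap, lintegral_smul_measure, smul_eq_mul]

theorem measurable_exp_smul : Measurable fun z : V × ℝ => Real.exp z.2 • z.1 :=
  (Continuous.smul (by fun_prop) continuous_fst).measurable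

/-- Integration in polar coordinates, normalised by a radial weight `h`. -/
theorem lintegral_weight_mul_lintegral_ray {μ : Measure V} {α : ℝ}
    (hhom : ∀ A : Set V, MeasurableSet A → ∀ c : ℝ, 0 < c →
      μ (c • A) = ENNReal.ofReal (c ^ α) * μ A)
    {E X : Set V} (hE : μ E < ⊤) (hEm : MeasurableSet E) (hX : MeasurableSet X) (hXE : X ⊆ E)
    {h : V → ℝ≥0∞} (hh : Measurable h) (hh0 : ∀ x, x ∉ E → h x = 0) :
    ∫⁻ x in E, h x * (∫⁻ u : ℝ, X.indicator 1 (Real.exp u • x) *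
      ENNReal.ofReal (Real.exp (α * u))) ∂μ
      = ∫⁻ y in X, (∫⁻ u : ℝ, h (Real.exp u • y)) ∂μ := by
  have : IsFiniteMeasure (μ.restrict E) := isFiniteMeasure_restrict.2 hE.ne
  have : IsFiniteMeasure (μ.restrict X) :=
    isFiniteMeasure_restrict.2 (measure_ne_top_of_subset hXE hE.ne)
  have hind : Measurable (X.indicator (1 : V → ℝ≥0∞)) := measurable_one.indicator hX
  have hm := measurable_exp_smul (V := V)
  have hm' : Measurable fun z : V × ℝ => Real.exp (-z.2) • z.1 :=
    (Continuous.smul (by fun_prop) continuous_fst).measurable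
  calc _ = ∫⁻ x in E, (∫⁻ u : ℝ, h x * (X.indicator 1 (Real.exp u • x) *
            ENNReal.ofReal (Real.exp (α * u)))) ∂μ := by
        refine lintegral_congr fun x => (lintegral_const_mul _ ?_).symm
        exact (hind.comp (hm.comp measurable_prodMk_left)).mul (by fun_prop)
    _ = ∫⁻ u : ℝ, ∫⁻ x in E, h x * (X.indicator 1 (Real.exp u • x) *
            ENNReal.ofReal (Real.exp (α * u))) ∂μ := by
        refine lintegral_lintegral_swap (Measurable.aemeasurable ?_)
        exact (hh.comp measurable_fst).mul ((hind.comp hm).mul (by fun_prop))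
    _ = ∫⁻ u : ℝ, ∫⁻ y in X, h (Real.exp (-u) • y) ∂μ := by
        refine lintegral_congr fun u => ?_
        have hg : Measurable fun y => h (Real.exp (-u) • y) * X.indicator 1 y :=
          (hh.comp (measurable_const_smul _)).mul hind
        have hscale := lintegral_comp_smul_of_homogeneous hhom hg u
        simp only [smul_smul, ← Real.exp_add, neg_add_cancel, Real.exp_zero, one_smul] at hscale
        rw [← lintegral_indicator hEm, ← lintegral_indicator hX]
        calc _ = ∫⁻ x, ENNReal.ofReal (Real.exp (α * u)) *
                  (h x * X.indicator 1 (Real.exp u • x)) ∂μ := by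
              refine lintegral_congr fun x => ?_
              by_cases hx : x ∈ E
              · simp only [indicator_of_mem hx]
                ring
              · simp [hx, hh0 x hx]
          _ = ∫⁻ y, h (Real.exp (-u) • y) * X.indicator 1 y ∂μ := by
              rw [lintegral_const_mul' _ _ ENNReal.ofReal_ne_top, hscale, ← mul_assoc,
                ← ENNReal.ofReal_mul (Real.exp_pos _).le, ← Real.exp_add]
              simp
          _ = _ := by
              refine lintegral_congr fun y => ?_
              by_cases hy : y ∈ X <;> simp [hy]
    _ = ∫⁻ y in X, (∫⁻ u : ℝ, h (Real.exp (-u) • y)) ∂μ := by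
        refine (lintegral_lintegral_swap (Measurable.aemeasurable ?_)).symm
        exact hh.comp hm'
    _ = _ := by
        refine lintegral_congr fun y => ?_
        exact lintegral_neg_eq_self (fun u => h (Real.exp u • y))

theorem exists_radial_weight {E : Set V} (hE : MeasurableSet E) :
    ∃ h : V → ℝ≥0∞, Measurable h ∧ (∀ x, x ∉ E → h x = 0) ∧
      (∀ y, ∫⁻ u : ℝ, h (Real.exp u • y) ≤ 1) ∧
      ∀ y, y ≠ 0 → (¬ ∀ᵐ u : ℝ, Real.exp u • y ∉ E) → ∫⁻ u : ℝ, h (Real.exp u • y) = 1 := by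
  have hm := measurable_exp_smul (V := V)
  set w : V → ℝ≥0∞ := E.indicator fun y => ENNReal.ofReal (Real.exp (-1 * Real.log ‖y‖ ^ 2))
    with hw
  have hwm : Measurable w := Measurable.indicator (by fun_prop) hE
  set W : V → ℝ≥0∞ := fun y => ∫⁻ u : ℝ, w (Real.exp u • y) with hW
  have hWm : Measurable W := (hwm.comp hm).lintegral_prod_right'
  have hWinv : ∀ (v : ℝ) (y : V), W (Real.exp v • y) = W y := by
    intro v y
    simp only [hW, smul_smul, ← Real.exp_add]
    exact lintegral_add_right_eq_self (fun u => w (Real.exp u • y)) v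
  have hint : ∀ y, ∫⁻ u : ℝ, w (Real.exp u • y) * (W (Real.exp u • y))⁻¹ = W y * (W y)⁻¹ := by
    intro y
    simp only [hWinv]
    exact lintegral_mul_const _ (hwm.comp (hm.comp measurable_prodMk_left))
  refine ⟨fun y => w y * (W y)⁻¹, hwm.mul hWm.inv, fun x hx => by simp [hw, hx],
    fun y => (hint y).trans_le (ENNReal.mul_inv_le_one _), fun y hy hyE => (hint y).trans ?_⟩
  refine ENNReal.mul_inv_cancel (fun h0 => hyE ?_) (ne_of_lt ?_)
  · replace h0 := (lintegral_eq_zero_iff (hwm.comp (hm.comp measurable_prodMk_left))).1 h0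
    filter_upwards [h0] with u hu huE
    simp only [Function.comp_apply] at hu
    simp only [hw, indicator_of_mem huE, Pi.zero_apply, ENNReal.ofReal_eq_zero] at hu
    exact absurd (Real.exp_pos _) (not_lt.2 hu)
  · calc W y ≤ ∫⁻ u : ℝ, ENNReal.ofReal (Real.exp (-1 * (u + Real.log ‖y‖) ^ 2)) := by
          refine lintegral_mono fun u => (indicator_le_self _ _ _).trans (le_of_eq ?_)
          simp only [norm_smul, Real.norm_eq_abs, Real.abs_exp]
          rw [Real.log_mul (Real.exp_ne_zero u) (norm_ne_zero_iff.2 hy), Real.log_exp]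
      _ = ∫⁻ u : ℝ, ENNReal.ofReal (Real.exp (-1 * u ^ 2)) :=
          lintegral_add_right_eq_self
            (fun u : ℝ => ENNReal.ofReal (Real.exp (-1 * u ^ 2))) (Real.log ‖y‖)
      _ < ⊤ := (integrable_exp_neg_mul_sq one_pos).lintegral_lt_top

theorem lintegral_ray_eq (X : Set V) (hX : MeasurableSet X) (α : ℝ) (x : V) :
    ∫⁻ u : ℝ, X.indicator 1 (Real.exp u • x) * ENNReal.ofReal (Real.exp (α * u)) =
      ∫⁻ r in {r : ℝ | r • x ∈ X} ∩ Ioi 0, ENNReal.ofReal (r ^ (α - 1)) := by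
  have hXm : MeasurableSet {r : ℝ | r • x ∈ X} := (measurable_id.smul_const x) hX
  rw [lintegral_exp_smul (fun r => X.indicator 1 (r • x)), ← setLIntegral_indicator hXm]
  refine lintegral_congr fun r => ?_
  by_cases hr : r • x ∈ X <;> simp [indicator, hr]

theorem not_ae_exp_smul_notMem_of_combo_notMem {lam : ℝ} (hlam : lam ∈ Ioo (0 : ℝ) 1)
    {A B F : Set V} (hA : MeasurableSet A) (hB : MeasurableSet B)
    (hAB : ∀ a ∈ A, ∀ b ∈ B, lam • a + (1 - lam) • b ∉ F) {x : V} (hx : x ∈ F) :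
    ¬ ∀ᵐ u : ℝ, Real.exp u • x ∉ Aᶜ ∪ Bᶜ := by
  intro hae
  have hE : MeasurableSet (Aᶜ ∪ Bᶜ) := hA.compl.union hB.compl
  have hl := hlam.1
  have hl' := sub_pos.2 hlam.2
  set N : Set ℝ := {r : ℝ | r • x ∈ Aᶜ ∪ Bᶜ} ∩ Ioi 0 with hN
  have hN0 : volume N = 0 := by
    have h := lintegral_ray_eq (Aᶜ ∪ Bᶜ) hE 1 x
    rw [lintegral_congr_ae (g := 0)] at h
    · simpa [hN] using h.symm
    · filter_upwards [hae] with u hu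
      simp [indicator_of_notMem hu]
  have hN0' : volume ((fun r : ℝ => (1 - lam)⁻¹ * (1 - lam * r)) ⁻¹' N) = 0 := by
    have hcomp : (fun r : ℝ => (1 - lam)⁻¹ * (1 - lam * r)) =
        (fun r => (1 - lam)⁻¹ + r) ∘ fun r => (-((1 - lam)⁻¹ * lam)) * r := by
      ext r
      simp only [Function.comp_apply]
      ring
    rw [hcomp, preimage_comp, Real.volume_preimage_mul_left
      (neg_ne_zero.2 (mul_pos (inv_pos.2 hl') hl).ne'), measure_preimage_add, hN0, mul_zero]
  obtain ⟨r, hr, hrN⟩ : ∃ r ∈ Ioo 0 (1 / lam),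
      r ∉ N ∪ (fun r : ℝ => (1 - lam)⁻¹ * (1 - lam * r)) ⁻¹' N := by
    by_contra! hcon
    have h := measure_mono_null (μ := volume) hcon (measure_union_null hN0 hN0')
    simp [hl] at h
  set s := (1 - lam)⁻¹ * (1 - lam * r) with hs
  have hs0 : 0 < s := by
    have : lam * r < 1 := by
      have := hr.2
      rw [lt_div_iff₀ hl] at this
      linarith
    exact mul_pos (inv_pos.2 hl') (by linarith)
  have hmem : ∀ t, 0 < t → t ∉ N → t • x ∈ A ∧ t • x ∈ B := by
    intro t ht htN
    by_contra hcon
    refine htN ⟨?_, ht⟩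
    rw [not_and_or] at hcon
    exact hcon
  refine hAB _ (hmem r hr.1 fun h => hrN (Or.inl h)).1 _
    (hmem s hs0 fun h => hrN (Or.inr h)).2 ?_
  have : lam • r • x + (1 - lam) • s • x = x := by
    rw [smul_smul, smul_smul, ← add_smul, hs, mul_inv_cancel_left₀ hl'.ne']
    simp
  rwa [this]

/-- Complemented concavity with exponent `1` of a homogeneous measure. -/
theorem measure_le_of_combo_notMem {μ : Measure V} {α : ℝ} (hα : 1 ≤ α ∨ α < 0)
    (hhom : ∀ A : Set V, MeasurableSet A → ∀ c : ℝ, 0 < c →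
      μ (c • A) = ENNReal.ofReal (c ^ α) * μ A)
    {lam : ℝ} (hlam : lam ∈ Ioo (0 : ℝ) 1)
    {A B F : Set V} (hA : MeasurableSet A) (hB : MeasurableSet B) (hF : MeasurableSet F)
    (hAtop : μ Aᶜ < ⊤) (hBtop : μ Bᶜ < ⊤)
    (hAB : ∀ a ∈ A, ∀ b ∈ B, lam • a + (1 - lam) • b ∉ F) :
    μ F ≤ ENNReal.ofReal lam * μ Aᶜ + ENNReal.ofReal (1 - lam) * μ Bᶜ := by
  have hEm : MeasurableSet (Aᶜ ∪ Bᶜ) := hA.compl.union hB.compl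
  have hE : μ (Aᶜ ∪ Bᶜ) < ⊤ := measure_union_lt_top hAtop hBtop
  have hFE : F ⊆ Aᶜ ∪ Bᶜ := by
    intro x hx
    by_contra hcon
    rw [← compl_inter, notMem_compl_iff] at hcon
    refine hAB x hcon.1 x hcon.2 ?_
    rwa [← add_smul, add_sub_cancel, one_smul]
  obtain ⟨h, hhm, hh0, hhle, hheq⟩ := exists_radial_weight hEm
  have hpolar := fun (X : Set V) (hX : MeasurableSet X) (hXE : X ⊆ Aᶜ ∪ Bᶜ) =>
    lintegral_weight_mul_lintegral_ray hhom hE hEm hX hXE hhm hh0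
  have hle : ∀ X : Set V, ∫⁻ y in X, (∫⁻ u : ℝ, h (Real.exp u • y)) ∂μ ≤ μ X := by
    intro X
    calc _ ≤ ∫⁻ y in X, 1 ∂μ := lintegral_mono fun y => hhle y
      _ = μ X := by simp
  have hzero : μ (F ∩ {0}) = 0 := by
    by_cases h0 : (0 : V) ∈ F
    · have hfin : μ {0} ≠ ⊤ := measure_ne_top_of_subset (singleton_subset_iff.2 (hFE h0)) hE.ne
      have h2 := hhom {0} (measurableSet_singleton 0) 2 two_pos
      have hne : (2 : ℝ) ^ α ≠ 1 := by
        rw [← Real.rpow_zero 2]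
        intro heq
        have := (Real.rpow_right_inj (by norm_num) (by norm_num)).1 heq
        rcases hα with hα | hα <;> linarith
      rw [smul_set_singleton, smul_zero] at h2
      refine measure_mono_null inter_subset_right ?_
      by_contra hpos
      refine hne ?_
      have := (ENNReal.mul_eq_right hpos hfin).1 h2.symm
      simpa using this
    · rw [inter_singleton_eq_empty.2 h0, measure_empty]
  have hFeq : ∫⁻ y in F, (∫⁻ u : ℝ, h (Real.exp u • y)) ∂μ = μ F := by
    rw [← setLIntegral_one]
    refine setLIntegral_congr_fun_ae hF ?_
    have hz : ∀ᵐ y ∂μ, y ∉ F ∩ {0} := measure_eq_zero_iff_ae_notMem.1 hzero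
    filter_upwards [hz] with y hy hyF
    exact hheq y (fun h0 => hy ⟨hyF, h0⟩)
      (not_ae_exp_smul_notMem_of_combo_notMem hlam hA hB hAB hyF)
  have hray : ∀ x, ∫⁻ u : ℝ, F.indicator 1 (Real.exp u • x) * ENNReal.ofReal (Real.exp (α * u)) ≤
      ENNReal.ofReal lam * (∫⁻ u : ℝ, Aᶜ.indicator 1 (Real.exp u • x) *
        ENNReal.ofReal (Real.exp (α * u))) +
      ENNReal.ofReal (1 - lam) * (∫⁻ u : ℝ, Bᶜ.indicator 1 (Real.exp u • x) *
        ENNReal.ofReal (Real.exp (α * u))) := by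
    intro x
    have hm : Measurable fun r : ℝ => r • x := measurable_id.smul_const x
    rw [lintegral_ray_eq F hF, lintegral_ray_eq Aᶜ hA.compl, lintegral_ray_eq Bᶜ hB.compl]
    refine setLIntegral_rpow_le_of_combo_notMem hlam (A := {r | r • x ∈ A})
      (B := {r | r • x ∈ B}) ?_ (hm hA) (hm hB) (hm hF) fun a ha _ b hb _ hab => ?_
    · rcases hα with hα | hα
      · exact Or.inl (by linarith)
      · exact Or.inr (by linarith)
    · refine hAB _ ha _ hb ?_
      rwa [smul_smul, smul_smul, ← add_smul]
  have hraym : ∀ X : Set V, MeasurableSet X → Measurable fun x => h x * ∫⁻ u : ℝ,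
      X.indicator 1 (Real.exp u • x) * ENNReal.ofReal (Real.exp (α * u)) := fun X hX =>
    hhm.mul <| Measurable.lintegral_prod_right'
      (f := fun z : V × ℝ => X.indicator 1 (Real.exp z.2 • z.1) *
        ENNReal.ofReal (Real.exp (α * z.2)))
      (((measurable_one.indicator hX).comp measurable_exp_smul).mul (by fun_prop))
  calc μ F = _ := hFeq.symm
    _ = _ := (hpolar F hF hFE).symm
    _ ≤ ∫⁻ x in Aᶜ ∪ Bᶜ, (ENNReal.ofReal lam * (h x * ∫⁻ u : ℝ, Aᶜ.indicator 1 (Real.exp u • x) *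
          ENNReal.ofReal (Real.exp (α * u))) +
        ENNReal.ofReal (1 - lam) * (h x * ∫⁻ u : ℝ, Bᶜ.indicator 1 (Real.exp u • x) *
          ENNReal.ofReal (Real.exp (α * u)))) ∂μ := by
        refine lintegral_mono fun x => (mul_le_mul_right (hray x) (h x)).trans (le_of_eq ?_)
        ring
    _ = ENNReal.ofReal lam * (∫⁻ y in Aᶜ, (∫⁻ u : ℝ, h (Real.exp u • y)) ∂μ) +
        ENNReal.ofReal (1 - lam) * (∫⁻ y in Bᶜ, (∫⁻ u : ℝ, h (Real.exp u • y)) ∂μ) := by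
        rw [lintegral_add_left ((hraym _ hA.compl).const_mul _),
          lintegral_const_mul' _ _ ENNReal.ofReal_ne_top,
          lintegral_const_mul' _ _ ENNReal.ofReal_ne_top,
          hpolar _ hA.compl subset_union_left, hpolar _ hB.compl subset_union_right]
    _ ≤ _ := by gcongr <;> exact hle _

/-- Rescaling `A` and `B` turns complemented concavity with exponent `1` into exponent `q`. -/
theorem measure_le_rpow_of_combo_notMem {μ : Measure V} {q : ℝ} (hq0 : q ≠ 0) (hq : q ≤ 1)
    (hhom : ∀ A : Set V, MeasurableSet A → ∀ c : ℝ, 0 < c →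
      μ (c • A) = ENNReal.ofReal (c ^ (1 / q)) * μ A)
    {lam : ℝ} (hlam : lam ∈ Ioo (0 : ℝ) 1)
    {A B F : Set V} (hA : MeasurableSet A) (hB : MeasurableSet B) (hF : MeasurableSet F)
    (hAB : ∀ a ∈ A, ∀ b ∈ B, lam • a + (1 - lam) • b ∉ F)
    {a b : ℝ} (ha : 0 < a) (hb : 0 < b)
    (hAa : μ Aᶜ ≤ ENNReal.ofReal a) (hBb : μ Bᶜ ≤ ENNReal.ofReal b) :
    μ F ≤ ENNReal.ofReal ((lam * a ^ q + (1 - lam) * b ^ q) ^ (1 / q)) := by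
  have hl := hlam.1
  have hl' := sub_pos.2 hlam.2
  have haq := Real.rpow_pos_of_pos ha q
  have hbq := Real.rpow_pos_of_pos hb q
  set M := lam * a ^ q + (1 - lam) * b ^ q with hM
  have hM0 : 0 < M := by positivity
  have hα : 1 ≤ 1 / q ∨ 1 / q < 0 := by
    rcases lt_or_gt_of_ne hq0 with h | h
    · exact Or.inr (one_div_neg.2 h)
    · exact Or.inl ((one_le_div h).2 hq)
  have hscale : ∀ {X : Set V} {x : ℝ}, MeasurableSet X → 0 < x → μ Xᶜ ≤ ENNReal.ofReal x →
      μ ((M / x ^ q) • X)ᶜ ≤ ENNReal.ofReal (M ^ (1 / q)) := by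
    intro X x hX hx hXx
    have hxq := Real.rpow_pos_of_pos hx q
    rw [← image_smul, ← image_compl_eq (MulAction.bijective₀ (div_pos hM0 hxq).ne'), image_smul,
      hhom _ hX.compl _ (div_pos hM0 hxq)]
    refine (mul_le_mul_right hXx _).trans (le_of_eq ?_)
    rw [← ENNReal.ofReal_mul (by positivity), Real.div_rpow hM0.le hxq.le, ← Real.rpow_mul hx.le,
      mul_one_div_cancel hq0, Real.rpow_one, div_mul_cancel₀ _ hx.ne']
  have hlt : lam * (a ^ q / M) ∈ Ioo (0 : ℝ) 1 := by
    refine ⟨by positivity, ?_⟩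
    rw [← mul_div_assoc, div_lt_one hM0, hM]
    have : 0 < (1 - lam) * b ^ q := by positivity
    linarith
  have hcompl : 1 - lam * (a ^ q / M) = (1 - lam) * (b ^ q / M) := by
    field_simp
    rw [hM]
    ring
  have hkey := measure_le_of_combo_notMem hα hhom hlt
    (hA.const_smul₀ (M / a ^ q)) (hB.const_smul₀ (M / b ^ q)) hF
    ((hscale hA ha hAa).trans_lt ENNReal.ofReal_lt_top)
    ((hscale hB hb hBb).trans_lt ENNReal.ofReal_lt_top) (by
      rintro _ ⟨x, hx, rfl⟩ _ ⟨y, hy, rfl⟩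
      have h1 : lam * (a ^ q / M) * (M / a ^ q) = lam := by field_simp
      have h2 : (1 - lam) * (b ^ q / M) * (M / b ^ q) = 1 - lam := by field_simp
      simp only [hcompl, smul_smul, h1, h2]
      exact hAB x hx y hy)
  calc μ F ≤ _ := hkey
    _ ≤ ENNReal.ofReal (lam * (a ^ q / M)) * ENNReal.ofReal (M ^ (1 / q)) +
        ENNReal.ofReal (1 - lam * (a ^ q / M)) * ENNReal.ofReal (M ^ (1 / q)) := by
        gcongr
        · exact hscale hA ha hAa
        · exact hscale hB hb hBb
    _ = _ := by
        rw [← add_mul, ← ENNReal.ofReal_add hlt.1.le (sub_nonneg.2 hlt.2.le)]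
        simp

end Radial

/-- a `q`-concave and `q`-homogeneous measure on `ℝⁿ`, `q ∈ (-∞,1/n]∖{0}`,
is `q`-complemented concave. -/
theorem stmt11 (n : ℕ) (hn : 1 ≤ n) (q : ℝ) (hq0 : q ≠ 0) (hq : q ≤ 1 / (n : ℝ))
    (μ : Measure (Fin n → ℝ))
    (hconc : ∀ A B : Set (Fin n → ℝ), MeasurableSet A → MeasurableSet B → 0 < μ A * μ B →
      ∀ lam ∈ Set.Ioo (0 : ℝ) 1,
        (ENNReal.ofReal lam * μ A ^ q + ENNReal.ofReal (1 - lam) * μ B ^ q) ^ (1 / q) ≤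
          innerMeasure μ (lam • A + (1 - lam) • B))
    (hhom : ∀ A : Set (Fin n → ℝ), MeasurableSet A → ∀ c : ℝ, 0 < c →
      μ (c • A) = ENNReal.ofReal (c ^ (1 / q)) * μ A) :
    ∀ lam ∈ Set.Ioo (0 : ℝ) 1, ∀ A B : Set (Fin n → ℝ),
      MeasurableSet A → MeasurableSet B → μ Aᶜ < ⊤ → μ Bᶜ < ⊤ →
      innerMeasure μ ((lam • A + (1 - lam) • B)ᶜ) ≤
        (ENNReal.ofReal lam * μ Aᶜ ^ q + ENNReal.ofReal (1 - lam) * μ Bᶜ ^ q) ^ (1 / q) := by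
  intro lam hlam A B hA hB hAtop hBtop
  have hl := hlam.1
  have hl' := sub_pos.2 hlam.2
  have hq1 : q ≤ 1 := hq.trans ((div_le_one (by positivity)).2 (by exact_mod_cast hn))
  refine iSup_le fun F => iSup_le fun hF => iSup_le fun hFsub => ?_
  have hAB : ∀ a ∈ A, ∀ b ∈ B, lam • a + (1 - lam) • b ∉ F := fun a ha b hb hab =>
    hFsub hab (add_mem_add (smul_mem_smul_set ha) (smul_mem_smul_set hb))
  have hφ : Continuous fun ε : ℝ => (ENNReal.ofReal lam * (μ Aᶜ + ENNReal.ofReal ε) ^ q +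
      ENNReal.ofReal (1 - lam) * (μ Bᶜ + ENNReal.ofReal ε) ^ q) ^ (1 / q) := by
    have hpow : ∀ x : ℝ≥0∞, Continuous fun ε : ℝ => (x + ENNReal.ofReal ε) ^ q := fun x =>
      ENNReal.continuous_rpow_const.comp (continuous_const.add ENNReal.continuous_ofReal)
    exact ENNReal.continuous_rpow_const.comp
      (((ENNReal.continuous_const_mul ENNReal.ofReal_ne_top).comp (hpow _)).add
        ((ENNReal.continuous_const_mul ENNReal.ofReal_ne_top).comp (hpow _)))
  have hlim := (hφ.tendsto 0).mono_left (nhdsWithin_le_nhds (s := Ioi 0))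
  simp only [ENNReal.ofReal_zero, add_zero] at hlim
  refine ge_of_tendsto hlim ?_
  filter_upwards [self_mem_nhdsWithin] with ε hε
  have hε : 0 < ε := hε
  have hsum : ∀ {x : ℝ≥0∞}, x < ⊤ → x + ENNReal.ofReal ε = ENNReal.ofReal (x.toReal + ε) := by
    intro x hx
    rw [ENNReal.ofReal_add ENNReal.toReal_nonneg hε.le, ENNReal.ofReal_toReal hx.ne]
  have ha : 0 < (μ Aᶜ).toReal + ε := by positivity
  have hb : 0 < (μ Bᶜ).toReal + ε := by positivity
  have haq := Real.rpow_pos_of_pos ha q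
  have hbq := Real.rpow_pos_of_pos hb q
  rw [hsum hAtop, hsum hBtop, ENNReal.ofReal_rpow_of_pos ha, ENNReal.ofReal_rpow_of_pos hb,
    ← ENNReal.ofReal_mul hl.le, ← ENNReal.ofReal_mul hl'.le,
    ← ENNReal.ofReal_add (by positivity) (by positivity),
    ENNReal.ofReal_rpow_of_pos (by positivity)]
  refine measure_le_rpow_of_combo_notMem hq0 hq1 hhom hlam hA hB hF hAB ha hb ?_ ?_
  · rw [← hsum hAtop]
    exact le_self_add
  · rw [← hsum hBtop]
    exact le_self_add
end

section
/- Let n ≥ 1 and let q ≤ 1 with q ≠ 0. Every σ-finite q-homogeneous Borel measure μ on ℝⁿ is q-complemented concave: for all λ ∈ (0,1) and all Borel sets A, B ⊆ ℝⁿ with μ(ℝⁿ∖A) < ∞ and μ(ℝⁿ∖B) < ∞, μ_*(ℝⁿ∖(λA+(1−λ)B)) ≤ (λ·μ(ℝⁿ∖A)^q + (1−λ)·μ(ℝⁿ∖B)^q)^{1/q}. -/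
open MeasureTheory Set Filter
open scoped Pointwise ENNReal

/-- `t ↦ t ^ q / q` is concave on the positive reals for `q ≤ 1`. -/
lemma rpow_div_self_concave {q : ℝ} (hq0 : q ≠ 0) (hq1 : q ≤ 1) {l a b : ℝ} (hl0 : 0 ≤ l)
    (hl1 : l ≤ 1) (ha : 0 < a) (hb : 0 < b) :
    l * (a ^ q / q) + (1 - l) * (b ^ q / q) ≤ (l * a + (1 - l) * b) ^ q / q := by
  have hl1' : 0 ≤ 1 - l := by linarith
  have hrw : l * (a ^ q / q) + (1 - l) * (b ^ q / q) = (l * a ^ q + (1 - l) * b ^ q) / q := by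
    ring
  rw [hrw]
  rcases lt_or_gt_of_ne hq0 with hq | hq
  · refine (div_le_div_right_of_neg hq).2 ?_
    have hg : 0 < a ^ l * b ^ (1 - l) := by positivity
    have hgm := Real.geom_mean_le_arith_mean2_weighted hl0 hl1' ha.le hb.le (by ring)
    calc (l * a + (1 - l) * b) ^ q ≤ (a ^ l * b ^ (1 - l)) ^ q :=
          Real.rpow_le_rpow_of_nonpos hg hgm hq.le
      _ = (a ^ q) ^ l * (b ^ q) ^ (1 - l) := by
          rw [Real.mul_rpow (by positivity) (by positivity), ← Real.rpow_mul ha.le,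
            ← Real.rpow_mul hb.le, ← Real.rpow_mul ha.le, ← Real.rpow_mul hb.le,
            mul_comm l, mul_comm (1 - l)]
      _ ≤ l * a ^ q + (1 - l) * b ^ q :=
          Real.geom_mean_le_arith_mean2_weighted hl0 hl1' (by positivity) (by positivity) (by ring)
  · have h := (Real.concaveOn_rpow hq.le hq1).2 (mem_Ici.2 ha.le) (mem_Ici.2 hb.le) hl0 hl1'
      (by ring)
    simp only [smul_eq_mul] at h
    gcongr

lemma rpow_div_self_le_iff {q : ℝ} (hq0 : q ≠ 0) {x y : ℝ} (hx : 0 < x) (hy : 0 < y) :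
    x ^ q / q ≤ y ^ q / q ↔ x ≤ y := by
  rcases lt_or_gt_of_ne hq0 with hq | hq
  · rw [div_le_div_right_of_neg hq, Real.rpow_le_rpow_iff_of_neg hy hx hq]
  · rw [div_le_div_iff_of_pos_right hq, Real.rpow_le_rpow_iff hx.le hy.le hq]

/-- The weighted power mean of two numbers. -/
noncomputable def powerMean (q l a b : ℝ) : ℝ := (l * a ^ q + (1 - l) * b ^ q) ^ (1 / q)

section powerMean

variable {q l a b : ℝ}

lemma powerMean_arg_pos (hl : l ∈ Ioo (0 : ℝ) 1) (ha : 0 < a) (hb : 0 < b) :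
    0 < l * a ^ q + (1 - l) * b ^ q := by
  have := hl.1
  have : 0 < 1 - l := by linarith [hl.2]
  positivity

lemma powerMean_pos (hl : l ∈ Ioo (0 : ℝ) 1) (ha : 0 < a) (hb : 0 < b) :
    0 < powerMean q l a b :=
  Real.rpow_pos_of_pos (powerMean_arg_pos hl ha hb) _

lemma powerMean_rpow (hq0 : q ≠ 0) (hl : l ∈ Ioo (0 : ℝ) 1) (ha : 0 < a) (hb : 0 < b) :
    powerMean q l a b ^ q = l * a ^ q + (1 - l) * b ^ q := by
  rw [powerMean, one_div, Real.rpow_inv_rpow (powerMean_arg_pos hl ha hb).le hq0]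

lemma powerMean_le_arith (hq0 : q ≠ 0) (hq1 : q ≤ 1) (hl : l ∈ Ioo (0 : ℝ) 1) (ha : 0 < a)
    (hb : 0 < b) : powerMean q l a b ≤ l * a + (1 - l) * b := by
  have hl0 := hl.1
  have hl1 : 0 < 1 - l := by linarith [hl.2]
  rw [← rpow_div_self_le_iff hq0 (powerMean_pos hl ha hb) (by positivity),
    powerMean_rpow hq0 hl ha hb]
  exact (le_of_eq (by ring)).trans (rpow_div_self_concave hq0 hq1 hl.1.le hl.2.le ha hb)

/-- Increasing both arguments by at least `h` increases the power mean by at least `h`. -/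
lemma powerMean_add_le (hq0 : q ≠ 0) (hq1 : q ≤ 1) (hl : l ∈ Ioo (0 : ℝ) 1) (ha : 0 < a)
    (hb : 0 < b) {a' b' h : ℝ} (hh : 0 ≤ h) (haa : a + h ≤ a') (hbb : b + h ≤ b') :
    powerMean q l a b + h ≤ powerMean q l a' b' := by
  have hl0 := hl.1
  have hl1 : 0 < 1 - l := by linarith [hl.2]
  have ha' : 0 < a' := by linarith
  have hb' : 0 < b' := by linarith
  have hm := powerMean_pos (q := q) hl ha hb
  have hmq := powerMean_rpow hq0 hl ha hb
  set m := powerMean q l a b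
  have hmh : 0 < m + h := by linarith
  rw [← rpow_div_self_le_iff hq0 hmh (powerMean_pos hl ha' hb'),
    powerMean_rpow hq0 hl ha' hb']
  have key : ∀ x x' : ℝ, 0 < x → x + h ≤ x' →
      (m + h) ^ q * (m / (m + h) * (x ^ q / m ^ q / q) + (1 - m / (m + h)) * (1 / q))
        ≤ x' ^ q / q := by
    intro x x' hx hxx
    have h1 := rpow_div_self_concave hq0 hq1 (l := m / (m + h)) (a := x / m) (b := 1)
      (by positivity) (by rw [div_le_one hmh]; linarith) (by positivity) one_pos
    have h2 : m / (m + h) * (x / m) + (1 - m / (m + h)) * 1 = (x + h) / (m + h) := by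
      field_simp; ring
    rw [h2, Real.div_rpow hx.le hm.le, Real.one_rpow,
      Real.div_rpow (by linarith) hmh.le] at h1
    have h3 : (x + h) ^ q / q ≤ x' ^ q / q :=
      (rpow_div_self_le_iff hq0 (by linarith) (by linarith)).2 hxx
    have h4 : 0 < (m + h) ^ q := by positivity
    calc _ ≤ (m + h) ^ q * ((x + h) ^ q / (m + h) ^ q / q) := by gcongr
      _ = (x + h) ^ q / q := by field_simp
      _ ≤ _ := h3
  have hA := mul_le_mul_of_nonneg_left (key a a' ha haa) hl0.le
  have hB := mul_le_mul_of_nonneg_left (key b b' hb hbb) hl1.le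
  have hmqp : 0 < m ^ q := by positivity
  have e : l * a ^ q / m ^ q + (1 - l) * b ^ q / m ^ q = 1 := by
    rw [← add_div, ← hmq, div_self hmqp.ne']
  calc (m + h) ^ q / q = (m + h) ^ q * (m / (m + h) *
        ((l * a ^ q / m ^ q + (1 - l) * b ^ q / m ^ q) / q) + (1 - m / (m + h)) * (1 / q)) := by
        rw [e]; ring
    _ ≤ _ := (le_of_eq (by ring)).trans ((add_le_add hA hB).trans (le_of_eq (by ring)))

end powerMean

/-- A closed set whose complement has finite measure in the half line is parametrized by an
expanding map at bounded distance from the identity. -/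
lemma exists_expanding_param {U : Set ℝ} (hU : IsOpen U) {α : ℝ} (hα : 0 ≤ α)
    (hUα : volume (U ∩ Ioi 0) ≤ ENNReal.ofReal α) :
    ∃ a : ℝ → ℝ, ∀ u, 0 < u → a u ∉ U ∧ u ≤ a u ∧ a u ≤ u + α ∧
      ∀ u', u ≤ u' → a u + (u' - u) ≤ a u' := by
  set g : ℝ → ℝ := fun x => x - volume.real (U ∩ Ioc 0 x) with hg
  have hfin : ∀ x y : ℝ, volume (U ∩ Ioc x y) ≠ ⊤ := fun x y =>
    measure_ne_top_of_subset inter_subset_right (by simp)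
  have hsplit : ∀ x y : ℝ, 0 ≤ x → x ≤ y → g y = g x + ((y - x) - volume.real (U ∩ Ioc x y)) := by
    intro x y hx hxy
    have : U ∩ Ioc 0 y = (U ∩ Ioc 0 x) ∪ (U ∩ Ioc x y) := by
      rw [← inter_union_distrib_left, Ioc_union_Ioc_eq_Ioc hx hxy]
    have hd : Disjoint (U ∩ Ioc 0 x) (U ∩ Ioc x y) :=
      (Ioc_disjoint_Ioc_of_le le_rfl).mono inter_subset_right inter_subset_right
    simp only [hg]
    rw [this, measureReal_union hd (hU.measurableSet.inter measurableSet_Ioc) (hfin _ _) (hfin _ _)]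
    ring
  have hle : ∀ x y : ℝ, x ≤ y → volume.real (U ∩ Ioc x y) ≤ y - x := by
    intro x y hxy
    have := measureReal_mono (μ := volume) (inter_subset_right : U ∩ Ioc x y ⊆ Ioc x y) (by simp)
    simpa [hxy] using this
  have hα' : ∀ x : ℝ, volume.real (U ∩ Ioc 0 x) ≤ α := by
    intro x
    refine ENNReal.toReal_le_of_le_ofReal hα ((measure_mono ?_).trans hUα)
    exact inter_subset_inter_right _ Ioc_subset_Ioi_self
  set T : ℝ → Set ℝ := fun u => {x | 0 ≤ x ∧ u ≤ g x} with hT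
  have hbdd : ∀ u, BddBelow (T u) := fun u => ⟨0, fun x hx => hx.1⟩
  have hmem : ∀ u, 0 < u → u + α ∈ T u := by
    intro u hu
    refine ⟨by positivity, ?_⟩
    have := hα' (u + α)
    simp only [hg]; linarith
  have hinf : ∀ u, 0 < u → sInf (T u) ∈ T u := by
    intro u hu
    have h0 : 0 ≤ sInf (T u) := le_csInf ⟨_, hmem u hu⟩ fun x hx => hx.1
    refine ⟨h0, le_of_forall_pos_le_add fun ε hε => ?_⟩
    obtain ⟨x, hx, hxε⟩ := exists_lt_of_csInf_lt ⟨_, hmem u hu⟩ (lt_add_of_pos_right (sInf (T u)) hε)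
    have h1 := hsplit _ x h0 (csInf_le (hbdd u) hx)
    have h2 : 0 ≤ volume.real (U ∩ Ioc (sInf (T u)) x) := measureReal_nonneg
    linarith [hx.2]
  have hlow : ∀ u, 0 < u → u ≤ sInf (T u) := by
    intro u hu
    have h1 := (hinf u hu).2
    have h2 : 0 ≤ volume.real (U ∩ Ioc 0 (sInf (T u))) := measureReal_nonneg
    simp only [hg] at h1; linarith
  refine ⟨fun u => sInf (T u), fun u hu => ⟨?_, hlow u hu, csInf_le (hbdd u) (hmem u hu), ?_⟩⟩
  · intro hmemU
    obtain ⟨δ, hδ, hball⟩ := Metric.isOpen_iff.1 hU _ hmemU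
    set s := sInf (T u)
    have hs : 0 < s := hu.trans_le (hlow u hu)
    set x := max 0 (s - δ / 2)
    have hx0 : 0 ≤ x := le_max_left _ _
    have hxs : x < s := max_lt hs (by linarith)
    have hsub : U ∩ Ioc x s = Ioc x s := by
      refine inter_eq_right.2 fun y hy => hball ?_
      have : s - δ / 2 ≤ x := le_max_right _ _
      rw [Metric.mem_ball, Real.dist_eq, abs_lt]
      constructor <;> linarith [hy.1, hy.2]
    have h1 := hsplit x s hx0 hxs.le
    rw [hsub, Real.volume_real_Ioc_of_le hxs.le] at h1
    have h2 : x ∈ T u := ⟨hx0, by linarith [(hinf u hu).2]⟩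
    exact absurd (csInf_le (hbdd u) h2) (not_le.2 hxs)
  · intro u' huu
    have hu' : 0 < u' := hu.trans_le huu
    have h1 := hlow u' hu'
    have h2 := (hinf u' hu').2
    have h3 : sInf (T u') - (u' - u) ∈ T u := by
      have h4 : 0 ≤ sInf (T u') - (u' - u) := by linarith
      have h5 := hsplit _ (sInf (T u')) h4 (by linarith)
      have h6 : 0 ≤ volume.real (U ∩ Ioc (sInf (T u') - (u' - u)) (sInf (T u'))) :=
        measureReal_nonneg
      exact ⟨h4, by linarith⟩
    have := csInf_le (hbdd u) h3
    show sInf (T u) + (u' - u) ≤ sInf (T u')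
    linarith

/-- Expanding maps of the line do not decrease the length of intervals. -/
lemma ofReal_le_volume_image_Ioc {m : ℝ → ℝ}
    (hm : ∀ u u', 0 < u → u ≤ u' → m u + (u' - u) ≤ m u') (u : ℝ) :
    ENNReal.ofReal u ≤ volume (m '' Ioc 0 u) := by
  have hdist : ∀ x ∈ Ioc 0 u, ∀ y ∈ Ioc 0 u, dist x y ≤ dist (m x) (m y) := by
    intro x hx y hy
    rw [Real.dist_eq, Real.dist_eq]
    rcases le_total x y with h | h
    · have := hm x y hx.1 h
      rw [abs_sub_comm, abs_sub_comm (m x), abs_of_nonneg (by linarith)]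
      exact le_trans (by linarith) (le_abs_self _)
    · have := hm y x hy.1 h
      rw [abs_of_nonneg (by linarith)]
      exact le_trans (by linarith) (le_abs_self _)
  have hinj : InjOn m (Ioc 0 u) := fun x hx y hy hxy => by
    have := hdist x hx y hy
    rw [hxy, dist_self] at this
    exact dist_le_zero.1 this
  have hleft := hinj.leftInvOn_invFunOn
  have hlip : LipschitzOnWith 1 (Function.invFunOn m (Ioc 0 u)) (m '' Ioc 0 u) := by
    refine LipschitzOnWith.of_dist_le_mul ?_
    rintro _ ⟨x, hx, rfl⟩ _ ⟨y, hy, rfl⟩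
    rw [hleft hx, hleft hy]
    simpa using hdist x hx y hy
  have h := hlip.hausdorffMeasure_image_le (d := 1) zero_le_one
  rw [hleft.image_image, hausdorffMeasure_real] at h
  simpa using h

/-- The one-dimensional inequality on a half line. -/
lemma volume_le_of_powerMean_notMem {q l : ℝ} (hq0 : q ≠ 0) (hq1 : q ≤ 1)
    (hl : l ∈ Ioo (0 : ℝ) 1) {F A B : Set ℝ} (hF : MeasurableSet F)
    (hFAB : ∀ a ∈ A, ∀ b ∈ B, 0 < a → 0 < b → powerMean q l a b ∉ F) :
    volume (Ioi 0 ∩ F) ≤ ENNReal.ofReal l * volume (Ioi 0 ∩ Aᶜ) +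
      ENNReal.ofReal (1 - l) * volume (Ioi 0 ∩ Bᶜ) := by
  have hl0 := hl.1
  have hl1 : 0 < 1 - l := by linarith [hl.2]
  by_cases hA : volume (Ioi 0 ∩ Aᶜ) = ⊤
  · rw [hA, ENNReal.mul_top (by simpa using hl0)]; simp
  by_cases hB : volume (Ioi 0 ∩ Bᶜ) = ⊤
  · rw [hB, ENNReal.mul_top (by simpa using hl.2)]; simp
  set α := (volume (Ioi 0 ∩ Aᶜ)).toReal with hα
  set β := (volume (Ioi 0 ∩ Bᶜ)).toReal with hβ
  have hα0 : 0 ≤ α := ENNReal.toReal_nonneg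
  have hβ0 : 0 ≤ β := ENNReal.toReal_nonneg
  rw [← ENNReal.ofReal_toReal hA, ← ENNReal.ofReal_toReal hB, ← ENNReal.ofReal_mul hl0.le,
    ← ENNReal.ofReal_mul hl1.le, ← ENNReal.ofReal_add (by positivity) (by positivity)]
  refine ENNReal.le_of_forall_pos_le_add fun ε hε _ => ?_
  have hε' : (0 : ℝ≥0∞) < ε := by exact_mod_cast hε
  obtain ⟨U, hAU, hU, hUm⟩ := (Ioi 0 ∩ Aᶜ).exists_isOpen_le_add (volume : Measure ℝ) hε'.ne'
  obtain ⟨V, hBV, hV, hVm⟩ := (Ioi 0 ∩ Bᶜ).exists_isOpen_le_add (volume : Measure ℝ) hε'.ne'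
  have hbound : ∀ (W X : Set ℝ), volume X ≠ ⊤ → volume W ≤ volume X + ε →
      volume (W ∩ Ioi 0) ≤ ENNReal.ofReal ((volume X).toReal + ε) := by
    intro W X hX hW
    rw [ENNReal.ofReal_add ENNReal.toReal_nonneg ε.coe_nonneg, ENNReal.ofReal_toReal hX,
      ENNReal.ofReal_coe_nnreal]
    exact (measure_mono inter_subset_left).trans hW
  obtain ⟨a, ha⟩ := exists_expanding_param hU (by positivity) (hbound U _ hA hUm)
  obtain ⟨b, hb⟩ := exists_expanding_param hV (by positivity) (hbound V _ hB hVm)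
  have hapos : ∀ u, 0 < u → 0 < a u := fun u hu => hu.trans_le (ha u hu).2.1
  have hbpos : ∀ u, 0 < u → 0 < b u := fun u hu => hu.trans_le (hb u hu).2.1
  have haA : ∀ u, 0 < u → a u ∈ A := fun u hu => by
    by_contra h
    exact (ha u hu).1 (hAU ⟨hapos u hu, h⟩)
  have hbB : ∀ u, 0 < u → b u ∈ B := fun u hu => by
    by_contra h
    exact (hb u hu).1 (hBV ⟨hbpos u hu, h⟩)
  set m : ℝ → ℝ := fun u => powerMean q l (a u) (b u) with hm
  have hmexp : ∀ u u', 0 < u → u ≤ u' → m u + (u' - u) ≤ m u' := fun u u' hu huu =>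
    powerMean_add_le hq0 hq1 hl (hapos u hu) (hbpos u hu) (by linarith)
      ((ha u hu).2.2.2 u' huu) ((hb u hu).2.2.2 u' huu)
  have hmpos : ∀ u, 0 < u → 0 < m u := fun u hu => powerMean_pos hl (hapos u hu) (hbpos u hu)
  have hmle : ∀ u, 0 < u → m u - u ≤ l * α + (1 - l) * β + ε := by
    intro u hu
    have h1 := powerMean_le_arith hq0 hq1 hl (hapos u hu) (hbpos u hu)
    have h2 := mul_le_mul_of_nonneg_left (ha u hu).2.2.1 hl0.le
    have h3 := mul_le_mul_of_nonneg_left (hb u hu).2.2.1 hl1.le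
    simp only [hm]
    linarith
  have htrunc : ∀ u, 0 < u →
      volume (Ioc 0 (m u) ∩ F) ≤ ENNReal.ofReal (l * α + (1 - l) * β + ε) := by
    intro u hu
    have h1 : volume (m '' Ioc 0 u) ≤ volume (Ioc 0 (m u) \ F) := by
      refine measure_mono ?_
      rintro _ ⟨x, hx, rfl⟩
      exact ⟨⟨hmpos x hx.1, by linarith [hmexp x u hx.1 hx.2, hx.2]⟩,
        hFAB _ (haA x hx.1) _ (hbB x hx.1) (hapos x hx.1) (hbpos x hx.1)⟩
    have h2 := measure_inter_add_sdiff (μ := volume) (Ioc 0 (m u)) hF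
    have h3 : volume (Ioc 0 (m u) ∩ F) + ENNReal.ofReal u ≤ ENNReal.ofReal (m u) := by
      calc _ ≤ volume (Ioc 0 (m u) ∩ F) + volume (Ioc 0 (m u) \ F) := by
            gcongr
            exact (ofReal_le_volume_image_Ioc hmexp u).trans h1
        _ = _ := by rw [h2]; simp
    calc _ ≤ ENNReal.ofReal (m u) - ENNReal.ofReal u :=
          ENNReal.le_sub_of_add_le_right (by simp) h3
      _ = ENNReal.ofReal (m u - u) := (ENNReal.ofReal_sub _ hu.le).symm
      _ ≤ _ := ENNReal.ofReal_le_ofReal (hmle u hu)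
  have hUn : Ioi 0 ∩ F = ⋃ k : ℕ, Ioc 0 (k : ℝ) ∩ F := by
    rw [← iUnion_inter]
    congr 1
    ext x
    simp only [mem_Ioi, mem_iUnion, mem_Ioc]
    exact ⟨fun h => (exists_nat_ge x).imp fun k hk => ⟨h, hk⟩, fun ⟨_, h⟩ => h.1⟩
  rw [hUn, Monotone.measure_iUnion]
  · refine iSup_le fun k => ?_
    have h1 := hmexp 1 (k + 1) one_pos (by simp)
    have h2 := hmpos 1 one_pos
    calc _ ≤ volume (Ioc 0 (m (k + 1)) ∩ F) := by
          refine measure_mono (inter_subset_inter_left _ (Ioc_subset_Ioc_right ?_))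
          linarith
      _ ≤ ENNReal.ofReal (l * α + (1 - l) * β + ε) := htrunc _ (by positivity)
      _ = _ := by
          rw [ENNReal.ofReal_add (by positivity) ε.coe_nonneg, ENNReal.ofReal_coe_nnreal]
  · intro i j hij
    exact inter_subset_inter_left _ (Ioc_subset_Ioc_right (by exact_mod_cast hij))

lemma lintegral_inv_Ioc_half {ρ : ℝ} (hρ : 0 < ρ) :
    ∫⁻ v in Ioc (ρ / 2) ρ, ENNReal.ofReal v⁻¹ = ENNReal.ofReal (Real.log 2) := by
  have hle : ρ / 2 ≤ ρ := by linarith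
  have h0 : (0 : ℝ) ∉ uIcc (ρ / 2) ρ := by
    rw [uIcc_of_le hle]
    exact fun h => absurd h.1 (by simpa using hρ)
  have hint : IntervalIntegrable (fun v : ℝ => v⁻¹) volume (ρ / 2) ρ :=
    intervalIntegrable_inv_iff.2 (Or.inr h0)
  rw [← ofReal_integral_eq_lintegral_ofReal, ← intervalIntegral.integral_of_le hle,
    integral_inv h0]
  · congr 2
    field_simp
  · exact (intervalIntegrable_iff_integrableOn_Ioc_of_le hle).1 hint
  · filter_upwards [ae_restrict_mem measurableSet_Ioc] with v hv
    exact inv_nonneg.2 (by linarith [hv.1])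

section Homogeneous

variable {E : Type*} [NormedAddCommGroup E] [NormedSpace ℝ E] [MeasurableSpace E] [BorelSpace E]
  [SecondCountableTopology E] {μ : Measure E} [SigmaFinite μ] {q : ℝ}

lemma measure_singleton_zero_of_homogeneous (hq0 : q ≠ 0)
    (hhom : ∀ A : Set E, MeasurableSet A → ∀ c : ℝ, 0 < c →
      μ (c • A) = ENNReal.ofReal (c ^ (1 / q)) * μ A) : μ {0} = 0 := by
  have h := hhom {0} (measurableSet_singleton 0) 2 two_pos
  rw [smul_set_singleton, smul_zero] at h
  have hfin : μ {(0 : E)} ≠ ⊤ := measure_singleton_lt_top.ne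
  by_contra hne
  have h1 := congrArg ENNReal.toReal h
  rw [ENNReal.toReal_mul, ENNReal.toReal_ofReal (by positivity)] at h1
  have hpos : 0 < (μ {(0 : E)}).toReal := ENNReal.toReal_pos hne hfin
  have h2 : (2 : ℝ) ^ (1 / q) = 1 := by
    field_simp at h1
    linarith
  have h3 := congrArg Real.log h2
  rw [Real.log_rpow two_pos, Real.log_one] at h3
  exact mul_ne_zero (one_div_ne_zero hq0) (Real.log_pos one_lt_two).ne' h3

/-- Polar coordinates for a homogeneous measure: its restriction to the shell
`1 ≤ ‖y‖ ^ (1 / q) < 2` plays the role of the spherical part. -/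
lemma homogeneous_polar (hq0 : q ≠ 0)
    (hhom : ∀ A : Set E, MeasurableSet A → ∀ c : ℝ, 0 < c →
      μ (c • A) = ENNReal.ofReal (c ^ (1 / q)) * μ A) {A : Set E} (hA : MeasurableSet A) :
    ENNReal.ofReal (Real.log 2) * μ A =
      ∫⁻ y in {y : E | y ≠ 0 ∧ ‖y‖ ^ (1 / q) ∈ Ico (1 : ℝ) 2},
        volume (Ioi 0 ∩ {v : ℝ | v ^ q • y ∈ A}) ∂μ := by
  set S : Set E := {y : E | y ≠ 0 ∧ ‖y‖ ^ (1 / q) ∈ Ico (1 : ℝ) 2} with hS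
  have hSm : MeasurableSet S := by
    refine (measurableSet_singleton (0 : E)).compl.inter ?_
    exact (measurable_norm.pow_const (1 / q)) measurableSet_Ico
  have hP : MeasurableSet {p : E × ℝ | 0 < p.2 ∧ p.2 ^ q • p.1 ∈ A} :=
    (measurableSet_lt measurable_const measurable_snd).inter
      (((measurable_snd.pow_const q).smul measurable_fst) hA)
  have hslice : ∀ v ∈ Ioi (0 : ℝ), μ.restrict S {y | 0 < v ∧ v ^ q • y ∈ A} =
      ENNReal.ofReal v⁻¹ * μ ({x | v ^ (-q) • x ∈ S} ∩ A) := by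
    intro v hv
    have hv : 0 < v := hv
    have hvq : 0 < v ^ q := by positivity
    have hm : MeasurableSet {y : E | 0 < v ∧ v ^ q • y ∈ A} :=
      (MeasurableSet.const _).inter ((measurable_const_smul _) hA)
    have h := hhom _ (hm.inter hSm) _ hvq
    have hset : v ^ q • ({y : E | 0 < v ∧ v ^ q • y ∈ A} ∩ S) = {x | v ^ (-q) • x ∈ S} ∩ A := by
      ext x
      rw [mem_smul_set_iff_inv_smul_mem₀ hvq.ne', ← Real.rpow_neg hv.le]
      have : v ^ q • v ^ (-q) • x = x := by
        rw [smul_smul, ← Real.rpow_add hv, add_neg_cancel, Real.rpow_zero, one_smul]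
      simp only [mem_inter_iff, mem_ofPred_eq, this, hv, true_and]
      exact and_comm
    rw [hset, one_div, Real.rpow_rpow_inv hv.le hq0] at h
    rw [Measure.restrict_apply hm, h, ← mul_assoc, ← ENNReal.ofReal_mul (by positivity),
      inv_mul_cancel₀ hv.ne', ENNReal.ofReal_one, one_mul]
  have hQ : MeasurableSet {p : ℝ × E | p.1 ^ (-q) • p.2 ∈ S} :=
    ((measurable_fst.pow_const (-q)).smul measurable_snd) hSm
  have hray : ∀ x : E, x ≠ 0 → ∫⁻ v in Ioi (0 : ℝ),
      ({p : ℝ × E | p.1 ^ (-q) • p.2 ∈ S}.indicator (fun p => ENNReal.ofReal p.1⁻¹)) (v, x) =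
        ENNReal.ofReal (Real.log 2) := by
    intro x hx
    have hρ : 0 < ‖x‖ ^ (1 / q) := by positivity
    rw [← lintegral_inv_Ioc_half hρ, ← lintegral_indicator measurableSet_Ioi,
      ← lintegral_indicator measurableSet_Ioc]
    congr 1 with v
    have hmem : (v ∈ Ioi (0 : ℝ) ∧ v ^ (-q) • x ∈ S) ↔
        v ∈ Ioc (‖x‖ ^ (1 / q) / 2) (‖x‖ ^ (1 / q)) := by
      by_cases hv : 0 < v
      · have hn : ‖v ^ (-q) • x‖ ^ (1 / q) = ‖x‖ ^ (1 / q) / v := by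
          rw [norm_smul, Real.norm_of_nonneg (by positivity),
            Real.mul_rpow (by positivity) (by positivity), ← Real.rpow_mul hv.le,
            show -q * (1 / q) = -1 by field_simp, Real.rpow_neg_one]
          ring
        have hne : v ^ (-q) • x ≠ 0 := smul_ne_zero (by positivity) hx
        simp only [hS, mem_ofPred_eq, hn, mem_Ioi, hv, true_and, mem_Ico, mem_Ioc, hne, ne_eq,
          not_false_eq_true]
        rw [one_le_div hv, div_lt_iff₀ hv, div_lt_iff₀ two_pos, mul_comm]
        exact and_comm
      · refine iff_of_false (fun h => hv h.1) fun h => hv ?_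
        have : 0 < ‖x‖ ^ (1 / q) / 2 := by positivity
        exact this.trans h.1
    by_cases h : v ∈ Ioc (‖x‖ ^ (1 / q) / 2) (‖x‖ ^ (1 / q))
    · rw [indicator_of_mem h, indicator_of_mem (hmem.2 h).1, indicator_of_mem]
      exact (hmem.2 h).2
    · rw [indicator_of_notMem h]
      by_cases hv : v ∈ Ioi (0 : ℝ)
      · rw [indicator_of_mem hv, indicator_of_notMem]
        exact fun h' => h (hmem.1 ⟨hv, h'⟩)
      · rw [indicator_of_notMem hv]
  have hzero : ∀ᵐ x ∂(μ.restrict A), x ≠ 0 := by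
    refine ae_restrict_of_ae ?_
    rw [ae_iff]
    simpa using measure_singleton_zero_of_homogeneous hq0 hhom
  symm
  calc ∫⁻ y in S, volume (Ioi 0 ∩ {v : ℝ | v ^ q • y ∈ A}) ∂μ
      = ((μ.restrict S).prod volume) {p : E × ℝ | 0 < p.2 ∧ p.2 ^ q • p.1 ∈ A} :=
        (Measure.prod_apply hP).symm
    _ = ∫⁻ v, μ.restrict S {y | 0 < v ∧ v ^ q • y ∈ A} := Measure.prod_apply_symm hP
    _ = ∫⁻ v in Ioi (0 : ℝ), μ.restrict S {y | 0 < v ∧ v ^ q • y ∈ A} := by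
        refine (setLIntegral_eq_of_support_subset ?_).symm
        intro v hv
        by_contra h
        exact hv (by simp [show ¬ 0 < v from h])
    _ = ∫⁻ v in Ioi (0 : ℝ), ENNReal.ofReal v⁻¹ * μ ({x | v ^ (-q) • x ∈ S} ∩ A) :=
        setLIntegral_congr_fun measurableSet_Ioi hslice
    _ = ∫⁻ v in Ioi (0 : ℝ), ∫⁻ x in A, ({p : ℝ × E | p.1 ^ (-q) • p.2 ∈ S}.indicator
          (fun p => ENNReal.ofReal p.1⁻¹)) (v, x) ∂μ := by
        refine lintegral_congr fun v => ?_
        have hm : MeasurableSet {x : E | v ^ (-q) • x ∈ S} := (measurable_const_smul _) hSm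
        rw [← Measure.restrict_apply hm, ← lintegral_indicator_const hm]
        rfl
    _ = ∫⁻ x in A, (∫⁻ v in Ioi (0 : ℝ), ({p : ℝ × E | p.1 ^ (-q) • p.2 ∈ S}.indicator
          (fun p => ENNReal.ofReal p.1⁻¹)) (v, x)) ∂μ := by
        refine lintegral_lintegral_swap (Measurable.aemeasurable ?_)
        exact (measurable_fst.inv.ennreal_ofReal).indicator hQ
    _ = ∫⁻ _ in A, ENNReal.ofReal (Real.log 2) ∂μ :=
        lintegral_congr_ae (hzero.mono hray)
    _ = ENNReal.ofReal (Real.log 2) * μ A := by simp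

/-- Homogeneous measures satisfy the complemented inequality with the arithmetic mean. -/
lemma measure_le_arith_of_homogeneous (hq0 : q ≠ 0) (hq1 : q ≤ 1)
    (hhom : ∀ A : Set E, MeasurableSet A → ∀ c : ℝ, 0 < c →
      μ (c • A) = ENNReal.ofReal (c ^ (1 / q)) * μ A)
    {l : ℝ} (hl : l ∈ Ioo (0 : ℝ) 1) {F A B : Set E} (hF : MeasurableSet F)
    (hA : MeasurableSet A) (hB : MeasurableSet B) (hFAB : F ⊆ (l • A + (1 - l) • B)ᶜ) :
    μ F ≤ ENNReal.ofReal l * μ Aᶜ + ENNReal.ofReal (1 - l) * μ Bᶜ := by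
  have hlog : ENNReal.ofReal (Real.log 2) ≠ 0 := by
    simpa using Real.log_pos one_lt_two
  rw [← ENNReal.mul_le_mul_iff_right hlog ENNReal.ofReal_ne_top, mul_add, mul_left_comm,
    mul_left_comm _ (ENNReal.ofReal (1 - l)), homogeneous_polar hq0 hhom hF,
    homogeneous_polar hq0 hhom hA.compl, homogeneous_polar hq0 hhom hB.compl]
  have hmeas : ∀ {C : Set E}, MeasurableSet C →
      Measurable fun y => volume (Ioi 0 ∩ {v : ℝ | v ^ q • y ∈ C}) := by
    intro C hC
    have hP : MeasurableSet {p : E × ℝ | 0 < p.2 ∧ p.2 ^ q • p.1 ∈ C} :=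
      (measurableSet_lt measurable_const measurable_snd).inter
        (((measurable_snd.pow_const q).smul measurable_fst) hC)
    exact measurable_measure_prodMk_left hP
  rw [← lintegral_const_mul _ (hmeas hA.compl), ← lintegral_const_mul _ (hmeas hB.compl),
    ← lintegral_add_left ((hmeas hA.compl).const_mul _)]
  refine lintegral_mono fun y => ?_
  refine volume_le_of_powerMean_notMem hq0 hq1 hl (A := {v : ℝ | v ^ q • y ∈ A})
    (B := {v : ℝ | v ^ q • y ∈ B})
    (((measurable_id.pow_const q).smul_const y) hF) fun a ha b hb ha0 hb0 hab => ?_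
  refine hFAB hab (mem_add.2 ⟨_, smul_mem_smul_set ha, _, smul_mem_smul_set hb, ?_⟩)
  rw [powerMean_rpow hq0 hl ha0 hb0, add_smul, mul_smul, mul_smul]

/-- The complemented inequality, with positive real upper bounds for the measures of the
complements. -/
lemma measure_le_powerMean_of_homogeneous (hq0 : q ≠ 0) (hq1 : q ≤ 1)
    (hhom : ∀ A : Set E, MeasurableSet A → ∀ c : ℝ, 0 < c →
      μ (c • A) = ENNReal.ofReal (c ^ (1 / q)) * μ A)
    {l : ℝ} (hl : l ∈ Ioo (0 : ℝ) 1) {F A B : Set E} (hF : MeasurableSet F)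
    (hA : MeasurableSet A) (hB : MeasurableSet B) (hFAB : F ⊆ (l • A + (1 - l) • B)ᶜ)
    {α β : ℝ} (hα : 0 < α) (hβ : 0 < β) (hAα : μ Aᶜ ≤ ENNReal.ofReal α)
    (hBβ : μ Bᶜ ≤ ENNReal.ofReal β) : μ F ≤ ENNReal.ofReal (powerMean q l α β) := by
  have hl0 := hl.1
  have hl1 : 0 < 1 - l := by linarith [hl.2]
  have hM := powerMean_pos (q := q) hl hα hβ
  have hMq := powerMean_rpow hq0 hl hα hβ
  set M := powerMean q l α β
  have hMq0 : 0 < M ^ q := by positivity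
  set r := l * α ^ q / M ^ q with hr
  have hr' : 1 - r = (1 - l) * β ^ q / M ^ q := by
    rw [hr, eq_div_iff hMq0.ne', sub_mul, div_mul_cancel₀ _ hMq0.ne', hMq]; ring
  have hr0 : 0 < r := by positivity
  have hr1 : 0 < 1 - r := by rw [hr']; positivity
  have hscale : ∀ {C : Set E} {γ : ℝ}, MeasurableSet C → 0 < γ → μ Cᶜ ≤ ENNReal.ofReal γ →
      μ ((M / γ) ^ q • C)ᶜ ≤ ENNReal.ofReal M := by
    intro C γ hC hγ hCγ
    have hc : 0 < (M / γ) ^ q := by positivity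
    have hcompl : (M / γ) ^ q • Cᶜ = ((M / γ) ^ q • C)ᶜ :=
      image_compl_eq (MulAction.bijective₀ hc.ne')
    rw [← hcompl, hhom _ hC.compl _ hc, one_div,
      Real.rpow_rpow_inv (by positivity) hq0]
    calc _ ≤ ENNReal.ofReal (M / γ) * ENNReal.ofReal γ := by gcongr
      _ = ENNReal.ofReal M := by
        rw [← ENNReal.ofReal_mul (by positivity), div_mul_cancel₀ _ hγ.ne']
  have hw : ∀ {γ k : ℝ}, 0 < γ → k * γ ^ q / M ^ q * (M / γ) ^ q = k := by
    intro γ k hγ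
    have : 0 < γ ^ q := by positivity
    rw [Real.div_rpow hM.le hγ.le]
    field_simp
  have hsub : F ⊆ (r • ((M / α) ^ q • A) + (1 - r) • ((M / β) ^ q • B))ᶜ := by
    rwa [smul_smul, smul_smul, hr', hr, hw hα, hw hβ]
  calc μ F ≤ _ := measure_le_arith_of_homogeneous hq0 hq1 hhom ⟨hr0, by linarith⟩ hF
        (hA.const_smul_of_ne_zero (by positivity)) (hB.const_smul_of_ne_zero (by positivity)) hsub
    _ ≤ ENNReal.ofReal r * ENNReal.ofReal M + ENNReal.ofReal (1 - r) * ENNReal.ofReal M := by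
        gcongr
        · exact hscale hA hα hAα
        · exact hscale hB hβ hBβ
    _ = ENNReal.ofReal M := by
        rw [← add_mul, ← ENNReal.ofReal_add hr0.le hr1.le, add_sub_cancel, ENNReal.ofReal_one,
          one_mul]

end Homogeneous

lemma ofReal_powerMean {q l a b : ℝ} (hl : l ∈ Ioo (0 : ℝ) 1) (ha : 0 < a) (hb : 0 < b) :
    ENNReal.ofReal (powerMean q l a b) =
      (ENNReal.ofReal l * ENNReal.ofReal a ^ q +
        ENNReal.ofReal (1 - l) * ENNReal.ofReal b ^ q) ^ (1 / q) := by
  have hl0 := hl.1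
  have hl1 : 0 < 1 - l := by linarith [hl.2]
  rw [powerMean, ← ENNReal.ofReal_rpow_of_pos (powerMean_arg_pos hl ha hb),
    ENNReal.ofReal_add (by positivity) (by positivity), ENNReal.ofReal_mul hl0.le,
    ENNReal.ofReal_mul hl1.le, ENNReal.ofReal_rpow_of_pos ha, ENNReal.ofReal_rpow_of_pos hb]

/-- every σ-finite `q`-homogeneous Borel measure on `ℝⁿ`, `q ≤ 1`, `q ≠ 0`,
is `q`-complemented concave. -/
theorem stmt12 (n : ℕ) (hn : 1 ≤ n) (q : ℝ) (hq0 : q ≠ 0) (hq1 : q ≤ 1)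
    (μ : Measure (Fin n → ℝ)) (hσ : SigmaFinite μ)
    (hhom : ∀ A : Set (Fin n → ℝ), MeasurableSet A → ∀ c : ℝ, 0 < c →
      μ (c • A) = ENNReal.ofReal (c ^ (1 / q)) * μ A) :
    ∀ lam ∈ Set.Ioo (0 : ℝ) 1, ∀ A B : Set (Fin n → ℝ),
      MeasurableSet A → MeasurableSet B → μ Aᶜ < ⊤ → μ Bᶜ < ⊤ →
      innerMeasure μ ((lam • A + (1 - lam) • B)ᶜ) ≤
        (ENNReal.ofReal lam * μ Aᶜ ^ q + ENNReal.ofReal (1 - lam) * μ Bᶜ ^ q) ^ (1 / q) := by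
  intro lam hlam A B hA hB hAfin hBfin
  refine iSup_le fun F => iSup_le fun hF => iSup_le fun hFsub => ?_
  have hlim : Tendsto (fun ε : ℝ =>
      (ENNReal.ofReal lam * ENNReal.ofReal ((μ Aᶜ).toReal + ε) ^ q +
        ENNReal.ofReal (1 - lam) * ENNReal.ofReal ((μ Bᶜ).toReal + ε) ^ q) ^ (1 / q))
      (nhdsWithin 0 (Ioi 0))
      (nhds ((ENNReal.ofReal lam * μ Aᶜ ^ q + ENNReal.ofReal (1 - lam) * μ Bᶜ ^ q) ^ (1 / q))) := by
    have hterm : ∀ (c x : ℝ), Tendsto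
        (fun ε : ℝ => ENNReal.ofReal c * ENNReal.ofReal (x + ε) ^ q) (nhds 0)
        (nhds (ENNReal.ofReal c * ENNReal.ofReal x ^ q)) := by
      intro c x
      refine ENNReal.Tendsto.const_mul ?_ (Or.inr ENNReal.ofReal_ne_top)
      refine (ENNReal.continuous_rpow_const.tendsto _).comp (ENNReal.tendsto_ofReal ?_)
      simpa using (tendsto_const_nhds (x := x)).add (tendsto_id (x := nhds (0 : ℝ)))
    have h := (hterm lam (μ Aᶜ).toReal).add (hterm (1 - lam) (μ Bᶜ).toReal)
    rw [ENNReal.ofReal_toReal hAfin.ne, ENNReal.ofReal_toReal hBfin.ne] at h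
    exact ((ENNReal.continuous_rpow_const.tendsto _).comp h).mono_left nhdsWithin_le_nhds
  refine ge_of_tendsto hlim ?_
  filter_upwards [self_mem_nhdsWithin] with ε hε
  have hε : 0 < ε := hε
  have hle : ∀ {x : ℝ≥0∞}, x < ⊤ → x ≤ ENNReal.ofReal (x.toReal + ε) := fun hx =>
    (ENNReal.ofReal_toReal hx.ne).symm.le.trans (ENNReal.ofReal_le_ofReal (by linarith))
  rw [← ofReal_powerMean hlam (by positivity) (by positivity)]
  exact measure_le_powerMean_of_homogeneous hq0 hq1 hhom hlam hF hA hB hFsub (by positivity)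
    (by positivity) (hle hAfin) (hle hBfin)
end
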